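/- Let Θ ⊆ ℝ^d be convex, f₁, …, f_n : ℝ^d → ℝ convex and differentiable, θ₁ ∈ Θ, α_t > 0 for t = 1, …, T. For each t and each history (i₁,…,i_{t−1}) ∈ {1,…,n}^{t−1}, let p_t(·; i₁,…,i_{t−1}) be a probability vector with all entries positive, let w^t_i = 1/(n p_t(i)), and define θ_{t+1}(i₁,…,i_t) ∈ Θ as a Euclidean projection of θ_t − α_t w^t_{i_t} ∇f_{i_t}(θ_t) onto Θ. Assign to each partial trajectory (i₁,…,i_t) the probability P(i₁,…,i_t) = Π_{τ=1}^t p_τ(i_τ; i₁,…,i_{τ−1}), and write E for expectation under these trajectory probabilities. Then for every θ* ∈ Θ, with f = (1/n) Σ_i f_i: Σ_{t=1}^T E[ f(θ_t) − f(θ*) ] ≤ Σ_{t=1}^T (α_t/2) E[ (w^t_{i_t})² ‖∇f_{i_t}(θ_t)‖₂² ] + Σ_{t=1}^T (1/(2α_t)) ( E[‖θ_t − θ*‖₂²] − E[‖θ_{t+1} − θ*‖₂²] ). -/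

import Mathlib

/-- Probability of the partial trajectory `s = (i₁, …, i_t)` under the history-dependent
sampling distributions `p`: `P(i₁,…,i_t) = Π_{τ=1}^t p_τ(i_τ; i₁,…,i_{τ−1})`. -/
def trajProb {n : ℕ} (p : (t : ℕ) → (Fin t → Fin n) → Fin n → ℝ) :
    (t : ℕ) → (Fin t → Fin n) → ℝ
  | 0, _ => 1
  | t + 1, s => trajProb p t (Fin.init s) * p t (Fin.init s) (s (Fin.last t))

lemma aux_proj {E : Type*} [NormedAddCommGroup E] [InnerProductSpace ℝ E] (K : Set E)
    (hK : Convex ℝ K) (u z v : E) (hu : u ∈ K) (hv : v ∈ K)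
    (h : ∀ x ∈ K, ‖u - z‖ ≤ ‖x - z‖) : ‖u - v‖ ^ 2 ≤ ‖z - v‖ ^ 2 := by
  have h1 : ‖z - u‖ = ⨅ w : K, ‖z - w‖ := by
    have : Nonempty K := ⟨⟨u, hu⟩⟩
    apply le_antisymm
    · apply le_ciInf
      intro x
      rw [norm_sub_rev z u, norm_sub_rev z x]
      exact h x x.2
    · exact ciInf_le (f := fun w : K => ‖z - w‖)
        ⟨0, by rintro _ ⟨x, rfl⟩; exact norm_nonneg _⟩ ⟨u, hu⟩
  have h2 := (norm_eq_iInf_iff_real_inner_le_zero hK hu).1 h1 v hv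
  have h3 : z - v = (z - u) - (v - u) := by abel
  rw [h3, norm_sub_sq_real (z - u), norm_sub_rev u v]
  nlinarith [sq_nonneg ‖z - u‖]

lemma aux_grad {E : Type*} [NormedAddCommGroup E] [InnerProductSpace ℝ E] [CompleteSpace E]
    (f : E → ℝ) (hf : ConvexOn ℝ Set.univ f) (hd : Differentiable ℝ f) (x y : E) :
    f x - f y ≤ inner ℝ (gradient f x) (x - y) := by
  have hg : ConvexOn ℝ Set.univ (fun t : ℝ => f (AffineMap.lineMap x y t)) := by
    exact hf.comp_affineMap (AffineMap.lineMap x y : ℝ →ᵃ[ℝ] E)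
  have hl : HasDerivAt (fun t : ℝ => AffineMap.lineMap x y t) (y - x) (0:ℝ) :=
    AffineMap.hasDerivAt_lineMap
  have hfd : HasFDerivAt f (InnerProductSpace.toDual ℝ E (gradient f x))
      (AffineMap.lineMap x y (0:ℝ)) := by
    rw [AffineMap.lineMap_apply_zero]
    exact (hd x).hasGradientAt.hasFDerivAt
  have hder := hfd.comp_hasDerivAt (0:ℝ) hl
  have := hg.le_slope_of_hasDerivAt (Set.mem_univ 0) (Set.mem_univ 1) one_pos hder
  rw [InnerProductSpace.toDual_apply_apply, slope_def_field] at this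
  simp only [AffineMap.lineMap_apply_zero, AffineMap.lineMap_apply_one, sub_zero, div_one] at this
  have e : x - y = -(y - x) := by abel
  rw [e, inner_neg_right]
  linarith

/-- Theorem 2 of the paper: expected regret bound for adaptive-probabilities SGD,
valid for any trajectory of sampling probabilities.  `θpath t s` is the iterate `θ_{t+1}`
produced by the history `s = (i₁,…,i_t)`; expectations are sums weighted by `trajProb`. -/
theorem stmt_6 (d n : ℕ) (hn : 0 < n) (T : ℕ) (hT : 1 ≤ T)
    (Θ : Set (EuclideanSpace ℝ (Fin d))) (hΘconv : Convex ℝ Θ)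
    (f : Fin n → EuclideanSpace ℝ (Fin d) → ℝ)
    (hconv : ∀ i, ConvexOn ℝ Set.univ (f i))
    (hdiff : ∀ i, Differentiable ℝ (f i))
    (α : ℕ → ℝ) (hα : ∀ t, 1 ≤ t → t ≤ T → 0 < α t)
    (p : (t : ℕ) → (Fin t → Fin n) → Fin n → ℝ)
    (hp : ∀ t s i, 0 < p t s i) (hpsum : ∀ t s, ∑ i, p t s i = 1)
    (w : (t : ℕ) → (Fin t → Fin n) → Fin n → ℝ)
    (hw : ∀ t s i, w t s i = 1 / ((n : ℝ) * p t s i))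
    (θ₁ : EuclideanSpace ℝ (Fin d)) (hθ₁ : θ₁ ∈ Θ)
    (θpath : (t : ℕ) → (Fin t → Fin n) → EuclideanSpace ℝ (Fin d))
    (hinit : ∀ s : Fin 0 → Fin n, θpath 0 s = θ₁)
    (hmem : ∀ t s, θpath t s ∈ Θ)
    (hproj : ∀ (t : ℕ) (s : Fin t → Fin n) (i : Fin n), ∀ u ∈ Θ,
      ‖θpath (t + 1) (Fin.snoc s i) -
          (θpath t s - (α (t + 1) * w t s i) • gradient (f i) (θpath t s))‖ ≤
        ‖u - (θpath t s - (α (t + 1) * w t s i) • gradient (f i) (θpath t s))‖)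
    (θstar : EuclideanSpace ℝ (Fin d)) (hθstar : θstar ∈ Θ) :
    -- regret: t ranges over 1..T, encoded as t = k+1 with k ∈ range T, and θ_t = θpath k
    ∑ k ∈ Finset.range T, ∑ s : Fin k → Fin n, trajProb p k s *
          ((1 / (n : ℝ)) * ∑ i, f i (θpath k s) - (1 / (n : ℝ)) * ∑ i, f i θstar) ≤
      ∑ k ∈ Finset.range T, (α (k + 1) / 2) *
          (∑ s : Fin k → Fin n, trajProb p k s *
            ∑ i, p k s i * (w k s i) ^ 2 * ‖gradient (f i) (θpath k s)‖ ^ 2) +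
      ∑ k ∈ Finset.range T, (1 / (2 * α (k + 1))) *
          ((∑ s : Fin k → Fin n, trajProb p k s * ‖θpath k s - θstar‖ ^ 2) -
           ∑ s : Fin k → Fin n, trajProb p k s *
              ∑ i, p k s i * ‖θpath (k + 1) (Fin.snoc s i) - θstar‖ ^ 2) := by
  rw [← Finset.sum_add_distrib]
  have hn' : (0:ℝ) < n := by exact_mod_cast hn
  have htp : ∀ t s, 0 ≤ trajProb p t s := by
    intro t
    induction t with
    | zero => intro s; simp [trajProb]
    | succ t ih => intro s; exact mul_nonneg (ih _) (hp _ _ _).le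
  apply Finset.sum_le_sum
  intro k hk
  have ha : 0 < α (k + 1) := hα _ (by omega) (by have := Finset.mem_range.1 hk; omega)
  rw [← Finset.sum_sub_distrib, Finset.mul_sum (a := α (k + 1) / 2),
    Finset.mul_sum (a := 1 / (2 * α (k + 1))), ← Finset.sum_add_distrib]
  apply Finset.sum_le_sum
  intro s _
  have key : (1 / (n : ℝ)) * ∑ i, f i (θpath k s) - (1 / (n : ℝ)) * ∑ i, f i θstar ≤
      (α (k + 1) / 2) * (∑ i, p k s i * (w k s i) ^ 2 * ‖gradient (f i) (θpath k s)‖ ^ 2) +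
      (1 / (2 * α (k + 1))) * (‖θpath k s - θstar‖ ^ 2 -
        ∑ i, p k s i * ‖θpath (k + 1) (Fin.snoc s i) - θstar‖ ^ 2) := by
    have e : ‖θpath k s - θstar‖ ^ 2 = ∑ i, p k s i * ‖θpath k s - θstar‖ ^ 2 := by
      rw [← Finset.sum_mul, hpsum, one_mul]
    rw [e, ← Finset.sum_sub_distrib, ← mul_sub, ← Finset.sum_sub_distrib, Finset.mul_sum,
      Finset.mul_sum, Finset.mul_sum, ← Finset.sum_add_distrib]
    apply Finset.sum_le_sum
    intro i _
    have h1 := aux_proj Θ hΘconv _ _ θstar (hmem (k+1) (Fin.snoc s i)) hθstar (hproj k s i)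
    have h2 := aux_grad (f i) (hconv i) (hdiff i) (θpath k s) θstar
    have h3 : θpath k s - (α (k + 1) * w k s i) • gradient (f i) (θpath k s) - θstar =
      (θpath k s - θstar) - (α (k + 1) * w k s i) • gradient (f i) (θpath k s) := by abel
    rw [h3, norm_sub_sq_real (θpath k s - θstar), inner_smul_right, norm_smul, mul_pow, Real.norm_eq_abs, sq_abs,
      real_inner_comm] at h1
    have hpi := hp k s i
    have hpw : 1 / (n:ℝ) = p k s i * w k s i := by
      rw [hw]; field_simp
    have hwpos : 0 < w k s i := by rw [hw]; positivity
    rw [hpw]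
    generalize inner ℝ (gradient (f i) (θpath k s)) (θpath k s - θstar) = I at *
    generalize ‖gradient (f i) (θpath k s)‖ = G at *
    generalize ‖θpath k s - θstar‖ = A at *
    generalize ‖θpath (k + 1) (Fin.snoc s i) - θstar‖ = B at *
    generalize w k s i = W at *
    generalize p k s i = P at *
    generalize α (k+1) = a at *
    have h4 : W * I ≤ a / 2 * (W ^ 2 * G ^ 2) + 1 / (2 * a) * (A ^ 2 - B ^ 2) := by
      have : a / 2 * (W ^ 2 * G ^ 2) + 1 / (2 * a) * (A ^ 2 - B ^ 2) - W * I =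
        1 / (2 * a) * (A ^ 2 - 2 * (a * W * I) + (a * W) ^ 2 * G ^ 2 - B ^ 2) := by
        field_simp; ring
      have h5 : 0 ≤ 1 / (2 * a) * (A ^ 2 - 2 * (a * W * I) + (a * W) ^ 2 * G ^ 2 - B ^ 2) :=
        mul_nonneg (by positivity) (by linarith)
      linarith
    have h6 := mul_le_mul_of_nonneg_left h2 hwpos.le
    have h7 := mul_le_mul_of_nonneg_left (h6.trans h4) hpi.le
    linarith
  have := mul_le_mul_of_nonneg_left key (htp k s)
  linarith
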